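/- Let v ≥ 2 be an integer and let x be the largest prime such that the product of all primes p ≤ x is at most v. Then ∏_{p ≤ x} (p+1)/(p−1) < 11·(log log(v+4))², where the product ranges over all primes p ≤ x and log denotes the natural logarithm. -/

import Mathlib

/-!
Write `y = log x`, `P = ∏_{p ≤ x} (1 - 1/p)⁻¹` and `θ` for Chebyshev's function. Since
`(p+1)/(p-1) = (1 - 1/p²) (1 - 1/p)⁻²`, and the primes `2` and `3` contribute `2/3` to
`∏ (1 - 1/p²)`, the product in question is at most `(2/3) P²` (`prod_ratio_le`). On the other side
`log v ≥ θ(x)`, as `v` is at least the primorial of `x`. So it suffices to compare `P` with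
`log θ(x)`, and for large `x` the constant `11` leaves room for explicit Chebyshev and Mertens
bounds that are not sharp.

The bound on `P` (`mertens_prod_le`) comes from shifting the exponent to `1 + δ` with `δ = 1/y`.
The shifted Euler product is at most `∑ m^(-1-δ) ≤ 1 + 1/δ = 1 + y` (`euler_prod_le`), and shifting
costs a factor of at most `exp (δ ∑ log p / (p-1))` (`euler_factor_le`). The sum is at most `y + 2`
(`sum_log_div_sub_one_le`), by Mertens' argument: compare `∏ p^⌊n/p⌋ ∣ n!` with Stirling's upper
bound. Hence `P ≤ (1 + y) e^(1 + 2/y)`. Together with `θ(x) ≥ x/2` (`half_le_theta`) this settles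
`x ≥ 2^14` (`large_case`).

For `x < 2^14` the product and the primorial are both monotone in `x`, and five ranges of `x` suffice: on each, the product
up to the right end is compared with the primorial of the left end (`small_case`).
-/

open Finset Real

/-! ### Explicit bounds for exponentials and factorials -/

theorem exp_div_le (m k : ℕ) (hk : k ≠ 0) {q : ℝ} (hq : 0 ≤ q)
    (h : (2.7182818286 : ℝ) ^ m ≤ q ^ k) : exp (m / k) ≤ q := by
  refine le_of_pow_le_pow_left₀ hk hq (le_trans ?_ h)
  rw [← exp_nat_mul, mul_div_cancel₀ _ (by exact_mod_cast hk), ← mul_one (m : ℝ), exp_nat_mul]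
  exact pow_le_pow_left₀ (exp_pos _).le exp_one_lt_d9.le m

/-- The elementary half of Stirling's formula, `n! ≤ n ^ (n + 1) / e ^ (n - 1)`. -/
theorem log_factorial_le (n : ℕ) (hn : 1 ≤ n) :
    log (n.factorial : ℝ) ≤ (n + 1) * log n - n + 1 := by
  induction n, hn using Nat.le_induction with
  | base => simp
  | succ n hn ih =>
    have h0 : (0 : ℝ) < n := by exact_mod_cast hn
    have h1 : log ((n : ℝ) / (n + 1)) ≤ n / (n + 1) - 1 := log_le_sub_one_of_pos (by positivity)
    rw [log_div (by positivity) (by positivity)] at h1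
    have h2 : (n + 1) * (log n - log (n + 1)) ≤ -1 := by
      calc (n + 1) * (log n - log (n + 1)) ≤ (n + 1) * ((n : ℝ) / (n + 1) - 1) := by gcongr
        _ = -1 := by field_simp; ring
    rw [Nat.factorial_succ]
    push_cast
    rw [log_mul (by positivity) (by positivity)]
    nlinarith

/-! ### Mertens' bound for the sum of `log p / (p - 1)` -/

theorem pow_div_dvd_factorial {p : ℕ} (hp : p.Prime) (n : ℕ) : p ^ (n / p) ∣ n.factorial := by
  have := Fact.mk hp
  refine dvd_trans ?_ (Nat.factorial_dvd_factorial (Nat.mul_div_le n p))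
  rw [padicValNat_dvd_iff_le (Nat.factorial_ne_zero _), padicValNat_factorial_mul]
  omega

/-- Mertens' first theorem, upper bound: multiplying by `n` and replacing `n / p` by its floor costs
at most `θ(n) ≤ n log 4`, and what remains is at most `log n!`. -/
theorem sum_log_div_prime_le (n : ℕ) (hn : 1 ≤ n) :
    ∑ p ∈ (range (n + 1)).filter Nat.Prime, log p / p ≤
      log n + (log 4 - 1) + (log n + 1) / n := by
  have h0 : (0 : ℝ) < n := by exact_mod_cast hn
  have hdvd : ∏ p ∈ (range (n + 1)).filter Nat.Prime, p ^ (n / p) ∣ n.factorial := by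
    refine Finset.prod_dvd_of_isRelPrime ?_ fun p hp => pow_div_dvd_factorial (mem_filter.1 hp).2 n
    intro p hp q hq hpq
    exact (Nat.coprime_iff_isRelPrime.1 (Nat.Coprime.pow _ _ ((Nat.coprime_primes (mem_filter.1 hp).2 (mem_filter.1 hq).2).2 hpq)))
  have hle : ∑ p ∈ (range (n + 1)).filter Nat.Prime, ((n / p : ℕ) : ℝ) * log p
      ≤ log n.factorial := by
    have h1 : ((∏ p ∈ (range (n + 1)).filter Nat.Prime, p ^ (n / p) : ℕ) : ℝ) ≤ n.factorial := by
      exact_mod_cast Nat.le_of_dvd n.factorial_pos hdvd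
    push_cast at h1
    have hpos : ∀ p ∈ (range (n + 1)).filter Nat.Prime, (0 : ℝ) < (p : ℝ) ^ (n / p) := fun p hp =>
      pow_pos (by exact_mod_cast (mem_filter.1 hp).2.pos) _
    have h2 := log_le_log (prod_pos hpos) h1
    rw [log_prod (fun p hp => (hpos p hp).ne')] at h2
    simpa using h2
  have hθ : ∑ p ∈ (range (n + 1)).filter Nat.Prime, log p ≤ log 4 * n := by
    have := Chebyshev.theta_le_log4_mul_x h0.le
    rwa [Chebyshev.theta_eq_sum_primesLE_log] at this
  have hsum : ∑ p ∈ (range (n + 1)).filter Nat.Prime, (n * (log p / p)) ≤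
      ∑ p ∈ (range (n + 1)).filter Nat.Prime, ((((n / p : ℕ) : ℝ)) * log p + log p) := by
    refine sum_le_sum fun p hp => ?_
    have hp0 : 0 < p := (mem_filter.1 hp).2.pos
    have hf : (n : ℝ) / p ≤ ((n / p : ℕ) : ℝ) + 1 := by
      rw [div_le_iff₀ (by exact_mod_cast hp0)]
      exact_mod_cast (Nat.lt_div_mul_add hp0 (a := n)).le.trans (by rw [add_mul, one_mul])
    have := mul_le_mul_of_nonneg_right hf (log_natCast_nonneg p)
    calc (n : ℝ) * (log p / p) = n / p * log p := by ring
      _ ≤ _ := by linarith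
  rw [← mul_sum, sum_add_distrib] at hsum
  have hfac := log_factorial_le n hn
  have : log n + (log 4 - 1) + (log n + 1) / n =
      (((n + 1) * log n - n + 1) + log 4 * n) / n := by field_simp; ring
  rw [this, le_div_iff₀ h0]
  linarith

/-- Telescoping bound for the convergent series `∑ log m / (m (m - 1))` over all integers `m ≥ 2`;
the subtracted term in parentheses is what makes the induction close. -/
theorem sum_log_tail_le (n : ℕ) :
    ∑ m ∈ Ico 2 (n + 2), log m / (m * (m - 1)) ≤
      log 2 + 2 / 3 - (log (n + 2) / (n + 1) + 1 / (n + 3 / 2)) := by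
  induction n with
  | zero => norm_num
  | succ n ih =>
    rw [sum_Ico_succ_top (by omega)]
    push_cast
    have h1 : log (((n : ℝ) + 3) / (n + 2)) ≤ (n + 3) / (n + 2) - 1 :=
      log_le_sub_one_of_pos (by positivity)
    rw [log_div (by positivity) (by positivity)] at h1
    have h2 : (log ((n : ℝ) + 3) - log (n + 2)) / (n + 2) ≤ 1 / (n + 3 / 2) - 1 / (n + 5 / 2) := by
      calc (log ((n : ℝ) + 3) - log (n + 2)) / (n + 2) ≤ ((n + 3) / (n + 2) - 1) / (n + 2) := by
            gcongr
        _ = 1 / (n + 2) ^ 2 := by field_simp; ring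
        _ ≤ 1 / ((n + 3 / 2) * (n + 5 / 2)) := by gcongr; nlinarith
        _ = _ := by field_simp; ring
    have h3 : log ((n : ℝ) + 2) / ((n + 2) * (n + 2 - 1)) =
        log (n + 2) / (n + 1) - log (n + 2) / (n + 2) := by
      rw [show (n : ℝ) + 2 - 1 = n + 1 by ring]; field_simp; ring
    rw [h3]
    rw [sub_div] at h2
    ring_nf at *
    linarith

theorem sum_log_div_sub_one_le (n : ℕ) (hn : 2 ^ 14 ≤ n) :
    ∑ p ∈ (range (n + 1)).filter Nat.Prime, log p / ((p : ℝ) - 1) ≤ log n + 2 := by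
  have h1 := sum_log_div_prime_le n (le_trans (by norm_num) hn)
  have h0 : (2 ^ 14 : ℝ) ≤ n := by exact_mod_cast hn
  have h2 : ∑ p ∈ (range (n + 1)).filter Nat.Prime, log p / ((p : ℝ) * (p - 1)) ≤
      log 2 + 2 / 3 := by
    calc _ ≤ ∑ m ∈ Ico 2 (n + 2), log m / ((m : ℝ) * (m - 1)) := by
          refine sum_le_sum_of_subset_of_nonneg ?_ ?_
          · intro p hp
            rw [mem_filter, mem_range] at hp
            exact mem_Ico.2 ⟨hp.2.two_le, by omega⟩
          · intro m hm _
            have : (2 : ℝ) ≤ m := by exact_mod_cast (mem_Ico.1 hm).1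
            exact div_nonneg (log_natCast_nonneg m) (mul_nonneg (by linarith) (by linarith))
      _ ≤ _ := sum_log_tail_le n
      _ ≤ _ := by
          have : 0 ≤ log ((n : ℝ) + 2) := log_nonneg (by linarith)
          have : 0 ≤ log ((n : ℝ) + 2) / (n + 1) + 1 / (n + 3 / 2) := by positivity
          linarith
  have h3 : ∑ p ∈ (range (n + 1)).filter Nat.Prime, log p / ((p : ℝ) - 1) =
      ∑ p ∈ (range (n + 1)).filter Nat.Prime, log p / p +
      ∑ p ∈ (range (n + 1)).filter Nat.Prime, log p / ((p : ℝ) * (p - 1)) := by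
    rw [← sum_add_distrib]
    refine sum_congr rfl fun p hp => ?_
    have : (2 : ℝ) ≤ p := by exact_mod_cast (mem_filter.1 hp).2.two_le
    have : (p : ℝ) - 1 ≠ 0 := by linarith
    field_simp
    ring
  have h4 : log 4 = 2 * log 2 := by
    rw [show (4 : ℝ) = 2 ^ 2 by norm_num, log_pow]; norm_num
  have h5 : (log (n : ℝ) + 1) / n ≤ 1 / 10 := by
    rw [div_le_iff₀ (by linarith)]
    have := log_le_sub_one_of_pos (x := (n : ℝ) / 2 ^ 14) (by positivity)
    rw [log_div (by positivity) (by positivity), log_pow] at this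
    push_cast at this
    linarith [log_two_lt_d9]
  have := log_two_lt_d9
  linarith

/-! ### The Euler product at a shifted exponent -/

theorem sum_rpow_le {δ : ℝ} (hδ : 0 < δ) (N : ℕ) :
    ∑ m ∈ Icc 1 (N + 1), (m : ℝ) ^ (-(1 + δ)) ≤ 1 + 1 / δ - ((N : ℝ) + 1) ^ (-δ) / δ := by
  induction N with
  | zero => simp
  | succ N ih =>
    rw [sum_Icc_succ_top (by omega)]
    push_cast
    have hN : (0 : ℝ) < N + 1 := by positivity
    have hM : (0 : ℝ) < N + 1 + 1 := by positivity
    set M : ℝ := (N : ℝ) + 1 + 1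
    have h1 : log (((N : ℝ) + 1) / M) ≤ (N + 1) / M - 1 := log_le_sub_one_of_pos (by positivity)
    rw [log_div hN.ne' hM.ne', show ((N : ℝ) + 1) / M - 1 = - (1 / M) by
      simp only [M]; field_simp; ring] at h1
    have h2 : M ^ (-δ) * (1 + δ / M) ≤ ((N : ℝ) + 1) ^ (-δ) := by
      rw [rpow_def_of_pos hM, rpow_def_of_pos hN]
      calc exp (log M * -δ) * (1 + δ / M) ≤ exp (log M * -δ) * exp (δ * (log M - log (N + 1))) := by
            gcongr
            refine le_trans ?_ (add_one_le_exp _)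
            have : δ * (1 / M) ≤ δ * (log M - log (N + 1)) := by gcongr; linarith
            rw [mul_one_div] at this
            linarith
        _ = _ := by rw [← exp_add]; ring_nf
    have h3 : M ^ (-(1 + δ)) = M ^ (-δ) / M := by
      rw [show -(1 + δ) = -δ - 1 by ring, rpow_sub_one hM.ne']
    have h4 : M ^ (-δ) / M ≤ (((N : ℝ) + 1) ^ (-δ) - M ^ (-δ)) / δ := by
      rw [le_div_iff₀ hδ]
      calc _ = M ^ (-δ) * (1 + δ / M) - M ^ (-δ) := by ring
        _ ≤ _ := by linarith
    rw [h3]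
    rw [sub_div] at h4
    linarith

/-- The completely multiplicative function `m ↦ m ^ (-s)` on `ℕ` (with value `0` at `0` when
`s ≠ 0`). -/
noncomputable def rpowHom (s : ℝ) : ℕ →* ℝ where
  toFun m := (m : ℝ) ^ (-s)
  map_one' := by simp
  map_mul' a b := by
    push_cast
    exact mul_rpow (Nat.cast_nonneg a) (Nat.cast_nonneg b)

/-- Expanding the product gives a sum of `m ^ (-(1 + δ))` over smooth numbers `m`, which is at most
the sum over all `m ≥ 1`. -/
theorem euler_prod_le {δ : ℝ} (hδ : 0 < δ) (N : ℕ) :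
    ∏ p ∈ (range N).filter Nat.Prime, (1 - (p : ℝ) ^ (-(1 + δ)))⁻¹ ≤ 1 + 1 / δ := by
  have h := (EulerProduct.summable_and_hasSum_smoothNumbers_prod_primesBelow_geometric
    (f := rpowHom (1 + δ)) (fun {p} hp => by
      have hp1 : (1 : ℝ) < p := by exact_mod_cast hp.one_lt
      change ‖(p : ℝ) ^ (-(1 + δ))‖ < 1
      rw [Real.norm_of_nonneg (by positivity)]
      exact rpow_lt_one_of_one_lt_of_neg hp1 (by linarith)) N).2
  refine hasSum_le_of_sum_le h fun s => ?_
  have hs : s.image (fun m : N.smoothNumbers => (m : ℕ)) ⊆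
      Icc 1 ((s.image (fun m : N.smoothNumbers => (m : ℕ))).sup id + 1) := by
    intro m hm
    refine mem_Icc.2 ⟨?_, (Finset.le_sup (f := id) hm).trans (Nat.le_succ _)⟩
    obtain ⟨k, -, rfl⟩ := mem_image.1 hm
    exact Nat.pos_of_ne_zero (Nat.ne_zero_of_mem_smoothNumbers k.2)
  calc ∑ m ∈ s, rpowHom (1 + δ) m
      = ∑ m ∈ s.image (fun m : N.smoothNumbers => (m : ℕ)), (m : ℝ) ^ (-(1 + δ)) := by
        rw [sum_image (fun _ _ _ _ h => Subtype.ext h)]; rfl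
    _ ≤ _ := sum_le_sum_of_subset_of_nonneg hs fun m _ _ => by positivity
    _ ≤ _ := sum_rpow_le hδ _
    _ ≤ _ := by
      have : (0 : ℝ) ≤ (((s.image (fun m : N.smoothNumbers => (m : ℕ))).sup id : ℕ) + 1 : ℝ) ^ (-δ) / δ := by
        positivity
      linarith

/-- The cost, at one prime, of moving the exponent from `1` to `1 + δ`. -/
theorem euler_factor_le {δ : ℝ} (hδ : 0 < δ) {p : ℕ} (hp : 2 ≤ p) :
    (1 - (p : ℝ)⁻¹)⁻¹ ≤ (1 - (p : ℝ) ^ (-(1 + δ)))⁻¹ * exp (δ * (log p / (p - 1))) := by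
  have hp2 : (2 : ℝ) ≤ p := by exact_mod_cast hp
  have hp0 : (0 : ℝ) < p := by linarith
  have hp1 : (0 : ℝ) < p - 1 := by linarith
  have hlt : (p : ℝ) ^ (-(1 + δ)) < 1 := rpow_lt_one_of_one_lt_of_neg (by linarith) (by linarith)
  have hpow : (p : ℝ) ^ (-(1 + δ)) = exp (-(δ * log p)) / p := by
    rw [show -(1 + δ) = -δ - 1 by ring, rpow_sub_one hp0.ne', rpow_def_of_pos hp0]
    ring_nf
  have h1 : 0 < 1 - (p : ℝ)⁻¹ := by
    rw [show 1 - (p : ℝ)⁻¹ = (p - 1) / p by field_simp]; positivity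
  rw [inv_mul_eq_div, le_div_iff₀ (by linarith), inv_mul_le_iff₀ h1, hpow]
  calc 1 - exp (-(δ * log p)) / p ≤ 1 - (-(δ * log p) + 1) / p := by
        gcongr; exact add_one_le_exp _
    _ = (1 - (p : ℝ)⁻¹) * (δ * (log p / (p - 1)) + 1) := by field_simp; ring
    _ ≤ _ := by gcongr; exact add_one_le_exp _

/-- Mertens' third theorem as an explicit upper bound, from the shift `δ = 1 / log n`. -/
theorem mertens_prod_le (n : ℕ) (hn : 2 ^ 14 ≤ n) :
    ∏ p ∈ (range (n + 1)).filter Nat.Prime, (1 - (p : ℝ)⁻¹)⁻¹ ≤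
      (1 + log n) * exp (1 + 2 / log n) := by
  have h0 : (1 : ℝ) < n := by exact_mod_cast (lt_of_lt_of_le (by norm_num) hn)
  have hy : 0 < log n := log_pos h0
  have hδ : 0 < 1 / log (n : ℝ) := by positivity
  calc _ ≤ ∏ p ∈ (range (n + 1)).filter Nat.Prime, ((1 - (p : ℝ) ^ (-(1 + 1 / log (n : ℝ))))⁻¹ *
          exp (1 / log (n : ℝ) * (log p / (p - 1)))) := by
        refine prod_le_prod (fun p hp => ?_) fun p hp =>
          euler_factor_le hδ (mem_filter.1 hp).2.two_le
        exact inv_nonneg.2 (sub_nonneg.2 (Nat.cast_inv_le_one p))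
    _ = (∏ p ∈ (range (n + 1)).filter Nat.Prime, (1 - (p : ℝ) ^ (-(1 + 1 / log (n : ℝ))))⁻¹) *
          exp (1 / log (n : ℝ) * ∑ p ∈ (range (n + 1)).filter Nat.Prime, log p / ((p : ℝ) - 1)) := by
        rw [prod_mul_distrib, ← exp_sum, mul_sum]
    _ ≤ (1 + log n) * exp (1 / log (n : ℝ) * (log n + 2)) := by
        have := euler_prod_le hδ (n + 1)
        rw [one_div_one_div] at this
        have := sum_log_div_sub_one_le n hn
        gcongr
    _ = _ := by
        congr 2; field_simp

/-! ### Large `x` -/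

theorem prod_ratio_le (n : ℕ) (hn : 3 ≤ n) :
    ∏ p ∈ (range (n + 1)).filter Nat.Prime, (((p : ℝ) + 1) / (p - 1)) ≤
      2 / 3 * (∏ p ∈ (range (n + 1)).filter Nat.Prime, (1 - (p : ℝ)⁻¹)⁻¹) ^ 2 := by
  have h1 : ∏ p ∈ (range (n + 1)).filter Nat.Prime, (((p : ℝ) + 1) / (p - 1)) =
      (∏ p ∈ (range (n + 1)).filter Nat.Prime, (1 - ((p : ℝ) ^ 2)⁻¹)) *
      (∏ p ∈ (range (n + 1)).filter Nat.Prime, (1 - (p : ℝ)⁻¹)⁻¹) ^ 2 := by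
    rw [← prod_pow, ← prod_mul_distrib]
    refine prod_congr rfl fun p hp => ?_
    have : (2 : ℝ) ≤ p := by exact_mod_cast (mem_filter.1 hp).2.two_le
    have : (p : ℝ) - 1 ≠ 0 := by linarith
    rw [show 1 - (p : ℝ)⁻¹ = (p - 1) / p by field_simp]
    field_simp
    ring
  rw [h1]
  refine mul_le_mul_of_nonneg_right ?_ (sq_nonneg _)
  have hsub : ({2, 3} : Finset ℕ) ⊆ (range (n + 1)).filter Nat.Prime := by
    intro p hp
    simp only [mem_insert, mem_singleton] at hp
    rcases hp with rfl | rfl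
    · exact mem_filter.2 ⟨mem_range.2 (by omega), Nat.prime_two⟩
    · exact mem_filter.2 ⟨mem_range.2 (by omega), Nat.prime_three⟩
  have hb : ∀ p ∈ (range (n + 1)).filter Nat.Prime, (0 : ℝ) ≤ 1 - ((p : ℝ) ^ 2)⁻¹ := fun p hp => by
    have : (1 : ℝ) ≤ p := by exact_mod_cast (mem_filter.1 hp).2.one_le
    exact sub_nonneg.2 (inv_le_one_of_one_le₀ (one_le_pow₀ this))
  rw [← prod_sdiff hsub]
  calc _ ≤ 1 * ∏ p ∈ ({2, 3} : Finset ℕ), (1 - ((p : ℝ) ^ 2)⁻¹) := by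
        refine mul_le_mul_of_nonneg_right ?_ (prod_nonneg fun p hp => hb p (hsub hp))
        refine prod_le_one (fun p hp => hb p (mem_sdiff.1 hp).1) fun p _ => ?_
        have : (0 : ℝ) ≤ ((p : ℝ) ^ 2)⁻¹ := by positivity
        linarith
    _ = 2 / 3 := by rw [prod_pair (by norm_num)]; norm_num

/-- An explicit Chebyshev lower bound: `θ(n) ≥ n log 2 - log (n + 1) - 2 √n log n`, and at
`n = 2 ^ 14` the error terms are already below `n (log 2 - 1 / 2)`. -/
theorem half_le_theta (n : ℕ) (hn : 2 ^ 14 ≤ n) : (n : ℝ) / 2 ≤ Chebyshev.theta n := by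
  have h := Chebyshev.theta_ge n
  have h0 : (2 ^ 14 : ℝ) ≤ n := by exact_mod_cast hn
  have hl := log_two_lt_d9
  have hg := log_two_gt_d9
  set s := √(n : ℝ) with hs
  have hs2 : (n : ℝ) = s ^ 2 := (sq_sqrt (by positivity)).symm
  have hs1 : 128 ≤ s := by
    rw [hs, le_sqrt (by norm_num) (by positivity)]; norm_num at *; exact h0
  -- Tangent line of `log` at `√(2 ^ 14) = 128`.
  have hlog : log s ≤ 4 + s / 128 := by
    have := log_le_sub_one_of_pos (x := s / 2 ^ 7) (by positivity)
    rw [log_div (by positivity) (by positivity), log_pow] at this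
    norm_num at *
    linarith
  have hlogn : log (n : ℝ) = 2 * log s := by rw [hs2, log_pow]; norm_num
  have hlogn1 : log ((n : ℝ) + 1) ≤ log n + 1 := by
    have := log_le_sub_one_of_pos (x := ((n : ℝ) + 1) / n) (by positivity)
    rw [log_div (by positivity) (by positivity)] at this
    have h3 : ((n : ℝ) + 1) / n ≤ 2 := by rw [div_le_iff₀ (by linarith)]; linarith
    linarith
  have h4 : s * log n ≤ s * (8 + s / 64) := by gcongr; linarith
  rw [hs2] at h h4 hlogn1 hlogn ⊢
  nlinarith

theorem large_case (n : ℕ) (hn : 2 ^ 14 ≤ n) :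
    ∏ p ∈ (range (n + 1)).filter Nat.Prime, (((p : ℝ) + 1) / (p - 1)) <
      11 * log (Chebyshev.theta n) ^ 2 := by
  have h0 : (2 ^ 14 : ℝ) ≤ n := by exact_mod_cast hn
  have hpos : (0 : ℝ) < n := by linarith
  have hl := log_two_lt_d9
  have hg := log_two_gt_d9
  have hy : 9.7 ≤ log (n : ℝ) := by
    have := log_le_log (by norm_num) h0
    rw [log_pow] at this
    norm_num at *
    linarith
  have hL : log n - 0.6932 ≤ log (Chebyshev.theta n) := by
    have := log_le_log (by positivity) (half_le_theta n hn)
    rw [log_div (by positivity) (by positivity)] at this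
    linarith
  have he : exp (1 + 2 / log (n : ℝ)) ≤ 3.341 := by
    have h1 : 1 + 2 / log (n : ℝ) ≤ (193 : ℕ) / (160 : ℕ) := by
      have : 2 / log (n : ℝ) ≤ 0.2062 := by rw [div_le_iff₀ (by linarith)]; linarith
      norm_num at this ⊢
      linarith
    exact (exp_le_exp.2 h1).trans (exp_div_le _ _ (by norm_num) (by norm_num) (by norm_num))
  have hP := mertens_prod_le n hn
  have hP0 : 0 ≤ ∏ p ∈ (range (n + 1)).filter Nat.Prime, (1 - (p : ℝ)⁻¹)⁻¹ :=
    prod_nonneg fun p _ => inv_nonneg.2 (sub_nonneg.2 (Nat.cast_inv_le_one p))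
  -- `4.06 ^ 2 * (2 / 3) < 11`.
  have hP1 : ∏ p ∈ (range (n + 1)).filter Nat.Prime, (1 - (p : ℝ)⁻¹)⁻¹ <
      4.06 * log (Chebyshev.theta n) := by
    calc _ ≤ (1 + log n) * exp (1 + 2 / log n) := hP
      _ ≤ (1 + log n) * 3.341 := by gcongr
      _ < _ := by linarith
  have := prod_ratio_le n (le_trans (by norm_num) hn)
  have := pow_lt_pow_left₀ hP1 hP0 two_ne_zero
  nlinarith [sq_nonneg (log (Chebyshev.theta n))]

/-! ### Small `x` -/

/-- `n` has no prime factor at most `97`, except possibly `n` itself. Every prime passes this test,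
which the kernel evaluates quickly. -/
def Rough (n : ℕ) : Bool :=
  [2, 3, 5, 7, 11, 13, 17, 19, 23, 29, 31, 37, 41, 43, 47, 53, 59, 61, 67, 71, 73, 79, 83, 89,
    97].all fun q => n == q || n % q != 0

theorem Nat.Prime.rough {p : ℕ} (hp : p.Prime) : Rough p = true := by
  rw [Rough, List.all_eq_true]
  intro q hq
  rw [Bool.or_eq_true, beq_iff_eq, bne_iff_ne, or_iff_not_imp_right, not_not]
  intro h
  rcases (Nat.dvd_prime hp).1 (Nat.dvd_of_mod_eq_zero h) with rfl | h
  · simp at hq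
  · exact h.symm

/-- The integers in `[2, N]` passing the test `Rough`: a superset of the primes up to `N`. -/
def roughs (N : ℕ) : Finset ℕ := (range (N + 1)).filter fun n => 2 ≤ n ∧ Rough n = true

/-- The inequality for all `x` in `[X, N]` at once. The product over the primes up to `N` is at most
`a / b`, while `v ≥ W` for a lower bound `W` of the primorial of `X`. The chain
`exp (m / k) ≤ m' / k'` and `exp (m' / k') ≤ W + 4` gives `m / k ≤ log (log (v + 4))`; both links are
checked with the upper bound `2.7182818286` for `e`. -/
theorem small_case {X N : ℕ} (a b : ℕ) (hb : 0 < b)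
    (hab : b * ∏ n ∈ roughs N, (n + 1) ≤ a * ∏ n ∈ roughs N, (n - 1))
    (m k m' k' W : ℕ) (hk : k ≠ 0) (hk' : k' ≠ 0)
    (hc : (a : ℝ) / b < 11 * ((m : ℝ) / k) ^ 2)
    (hq : (2.7182818286 : ℝ) ^ m ≤ ((m' : ℝ) / k') ^ k)
    (hW : (2.7182818286 : ℝ) ^ m' ≤ ((W : ℝ) + 4) ^ k') (hWX : W ≤ primorial X)
    {x v : ℕ} (hX : X ≤ x) (hN : x ≤ N) (hle : primorial x ≤ v) :
    ∏ p ∈ (range (x + 1)).filter Nat.Prime, (((p : ℝ) + 1) / (p - 1)) <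
      11 * log (log ((v : ℝ) + 4)) ^ 2 := by
  have h2 : ∀ n ∈ roughs N, (2 : ℝ) ≤ n := fun n hn => by
    exact_mod_cast (mem_filter.1 hn).2.1
  have hge : ∀ n : ℕ, (2 : ℝ) ≤ n → (1 : ℝ) ≤ ((n : ℝ) + 1) / (n - 1) := fun n hn => by
    rw [le_div_iff₀ (by linarith)]; linarith
  have hprod : ∏ p ∈ (range (x + 1)).filter Nat.Prime, (((p : ℝ) + 1) / (p - 1)) ≤ a / b := by
    calc _ ≤ ∏ n ∈ roughs N, (((n : ℝ) + 1) / (n - 1)) := by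
          refine Finset.prod_le_prod_of_subset_of_one_le ?_ ?_ ?_
          · intro p hp
            rw [mem_filter, mem_range] at hp
            exact mem_filter.2 ⟨mem_range.2 (by omega), hp.2.two_le, hp.2.rough⟩
          · intro p hp
            exact zero_le_one.trans (hge p (by exact_mod_cast (mem_filter.1 hp).2.two_le))
          · intro n hn _
            exact hge n (h2 n hn)
      _ = (∏ n ∈ roughs N, ((n : ℝ) + 1)) / ∏ n ∈ roughs N, ((n : ℝ) - 1) := prod_div_distrib ..
      _ ≤ a / b := by
          rw [div_le_div_iff₀ (prod_pos fun n hn => by linarith [h2 n hn]) (by positivity)]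
          have h3 : ∏ n ∈ roughs N, ((n : ℝ) - 1) = ((∏ n ∈ roughs N, (n - 1) : ℕ) : ℝ) := by
            rw [Nat.cast_prod]
            refine prod_congr rfl fun n hn => ?_
            rw [Nat.cast_pred (by have := (mem_filter.1 hn).2.1; omega)]
          rw [h3, mul_comm]
          exact_mod_cast hab
  have hWv : (W : ℝ) + 4 ≤ v + 4 := by
    have : W ≤ v := hWX.trans ((primorial_mono hX).trans hle)
    gcongr
  have h4 : (m' : ℝ) / k' ≤ log (v + 4) :=
    (le_log_iff_exp_le (by positivity)).2
      ((exp_div_le m' k' hk' (by positivity) hW).trans hWv)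
  have h5 : exp ((m : ℝ) / k) ≤ log (v + 4) := (exp_div_le m k hk (by positivity) hq).trans h4
  have h6 : (m : ℝ) / k ≤ log (log (v + 4)) :=
    (le_log_iff_exp_le ((exp_pos _).trans_le h5)).2 h5
  calc _ ≤ (a : ℝ) / b := hprod
    _ < 11 * ((m : ℝ) / k) ^ 2 := hc
    _ ≤ _ := by gcongr

/-- Let v ≥ 2 and let x be the largest prime whose primorial ∏_{p ≤ x} p is
at most v.  Then ∏_{p ≤ x} (p+1)/(p−1) < 11·(log log(v+4))². -/
theorem prod_ratio_lt_loglog_sq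
    (v : ℕ) (hv : 2 ≤ v) (x : ℕ) (hx : x.Prime)
    (hle : ∏ p ∈ Finset.filter Nat.Prime (Finset.range (x + 1)), p ≤ v)
    (hmax : ∀ q : ℕ, q.Prime → x < q →
      v < ∏ p ∈ Finset.filter Nat.Prime (Finset.range (q + 1)), p) :
    ∏ p ∈ Finset.filter Nat.Prime (Finset.range (x + 1)),
        (((p : ℝ) + 1) / ((p : ℝ) - 1)) <
      11 * (Real.log (Real.log ((v : ℝ) + 4))) ^ 2 := by
  have hx2 := hx.two_le
  rcases Nat.lt_or_ge x 3 with h | h3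
  · exact small_case (X := 2) (N := 2) 3 1 (by norm_num) (by decide +kernel) 27 50 7 4 2
      (by norm_num) (by norm_num) (by norm_num) (by norm_num) (by norm_num)
      (by decide +kernel) (by omega) (by omega) hle
  rcases Nat.lt_or_ge x 5 with h | h5
  · exact small_case (X := 3) (N := 4) 6 1 (by norm_num) (by decide +kernel) 3 4 11 5 6
      (by norm_num) (by norm_num) (by norm_num) (by norm_num) (by norm_num)
      (by decide +kernel) (by omega) (by omega) hle
  rcases Nat.lt_or_ge x 17 with h | h17
  · exact small_case (X := 5) (N := 16) 84 5 (by norm_num) (by decide +kernel) 31 25 7 2 30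
      (by norm_num) (by norm_num) (by norm_num) (by norm_num) (by norm_num)
      (by decide +kernel) (by omega) (by omega) hle
  rcases Nat.lt_or_ge x 101 with h | h101
  · exact small_case (X := 17) (N := 100) 60 1 (by norm_num) (by decide +kernel) 12 5 111 10 510510
      (by norm_num) (by norm_num) (by norm_num) (by norm_num) (by norm_num)
      (by decide +kernel) (by omega) (by omega) hle
  rcases Nat.lt_or_ge x (2 ^ 14) with h | hlarge
  · exact small_case (X := 101) (N := 2 ^ 14) 200 1 (by norm_num) (by decide +kernel)
      43 10 74 1 (10 ^ 38)
      (by norm_num) (by norm_num) (by norm_num) (by norm_num) (by norm_num)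
      (by decide +kernel) (by omega) (by omega) hle
  · have hbig : (2 ^ 14 : ℝ) ≤ x := by exact_mod_cast hlarge
    have hθ : Chebyshev.theta x ≤ log ((v : ℝ) + 4) := by
      rw [Chebyshev.theta_eq_log_primorial, Nat.floor_natCast]
      refine log_le_log (by exact_mod_cast primorial_pos x) ?_
      have : (primorial x : ℝ) ≤ v := by exact_mod_cast hle
      linarith
    have hθ1 : 1 ≤ Chebyshev.theta x := by linarith [half_le_theta x hlarge]
    refine (large_case x hlarge).trans_le ?_
    have := log_nonneg hθ1
    gcongr
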